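/- Let n ≥ 3, let T ⊆ S_n be the set of all transpositions (so |T| = n(n−1)/2), and let t ≥ 0 be an integer. Then (2/(n(n−1)))^t · Σ over all (γ₁,…,γ_t) ∈ T^t of occ₍₁₋₂₋₃₎(γ₁γ₂⋯γ_t) equals C(n,3)/6 + ((n+1)(n−1)(3n−4)/60)·(1 − 2/(n−1))^t + ((n+1)n(n−3)/60)·(1 − 4/n)^t + ((3n−2)(n−1)(n−2)/60)·(1 − 4/(n−1))^t + (n(n−2)(n−4)/45)·(1 − 6/n)^t, where for t = 0 the empty product γ₁⋯γ_t is the identity permutation. In other words, this expression is the expected number of occurrences of the classical pattern 123 in a product of t independent uniformly random transpositions. -/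

import Mathlib

open Equiv Finset

noncomputable def sg {n : ℕ} (a b : Fin n) : ℝ := if a < b then 1 else if b < a then -1 else 0
noncomputable def uu {n : ℕ} (a : Fin n) : ℝ := 2 * (a.val : ℝ) + 1 - n

lemma sg_self {n : ℕ} (a : Fin n) : sg a a = 0 := by simp [sg]
lemma sg_anti {n : ℕ} (a b : Fin n) : sg b a = - sg a b := by
  unfold sg
  rcases lt_trichotomy a b with h | h | h
  · simp [h, h.not_gt]
  · simp [h]
  · simp [h, h.not_gt]
lemma sg_sq {n : ℕ} {a b : Fin n} (h : a ≠ b) : sg a b * sg a b = 1 := by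
  unfold sg
  rcases lt_or_gt_of_ne h with h | h
  · simp [h]
  · simp [h, h.not_gt]
lemma sg_lt {n : ℕ} {a b : Fin n} (h : a < b) : sg a b = 1 := by simp [sg, h]

lemma sg_cyc {n : ℕ} {a c : Fin n} (h : a ≠ c) (y : Fin n) :
    sg a y * sg y c = -1 + sg a c * sg y c + sg a c * sg a y := by
  unfold sg
  simp only [Fin.lt_def, ne_eq, Fin.ext_iff] at *
  split_ifs <;> first | omega | norm_num

lemma sum_sg {n : ℕ} (b : Fin n) (G : ℕ → ℝ) :
    ∑ y : Fin n, sg y b * G y = 2 * ∑ y ∈ range b, G y + G b - ∑ y ∈ range n, G y := by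
  have h1 : ∑ y ∈ range b.val, G y = ∑ y ∈ range n, if y < b.val then G y else 0 := by
    rw [← sum_filter]
    congr 1
    ext y
    have := b.2
    simp; omega
  have h2 : G b = ∑ y ∈ range n, if y = b.val then G y else 0 := by
    simp
  rw [h1, h2, mul_sum, ← sum_add_distrib, ← sum_sub_distrib,
    ← Fin.sum_univ_eq_sum_range (fun i => (2 * (if i < b.val then G i else 0) + (if i = b.val then G i else 0) - G i))]
  apply sum_congr rfl
  intro y _
  unfold sg
  simp only [Fin.lt_def]
  split_ifs <;> first | omega | ring

lemma range_u (N : ℝ) (m : ℕ) : ∑ y ∈ range m, (2 * (y:ℝ) + 1 - N) = m ^ 2 - N * m := by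
  induction m with
  | zero => simp
  | succ m ih => rw [sum_range_succ, ih]; push_cast; ring
lemma range_u2 (N : ℝ) (m : ℕ) : ∑ y ∈ range m, (2 * (y:ℝ) + 1 - N) ^ 2
    = m * (4 * m ^ 2 - 1) / 3 - 2 * N * m ^ 2 + N ^ 2 * m := by
  induction m with
  | zero => simp
  | succ m ih => rw [sum_range_succ, ih]; push_cast; ring

lemma sum_sl {n : ℕ} (b : Fin n) : ∑ y : Fin n, sg y b = uu b := by
  have := sum_sg b (fun _ => 1)
  simp at this
  rw [this, uu]
lemma sum_sr {n : ℕ} (b : Fin n) : ∑ y : Fin n, sg b y = - uu b := by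
  rw [← sum_sl, ← sum_neg_distrib]
  exact sum_congr rfl fun y _ => sg_anti _ _
lemma sum_su {n : ℕ} (b : Fin n) : ∑ y : Fin n, sg y b * uu y = (uu b ^ 2 - n ^ 2 + 1) / 2 := by
  have := sum_sg b (fun y => 2 * (y:ℝ) + 1 - n)
  unfold uu
  rw [this, range_u, range_u]
  ring
lemma sum_ss {n : ℕ} {a c : Fin n} (h : a ≠ c) :
    ∑ y : Fin n, sg a y * sg y c = sg a c * (uu c - uu a) - n := by
  simp_rw [sg_cyc h, sum_add_distrib, ← mul_sum, sum_sl, sum_sr]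
  simp; ring
lemma sum_u {n : ℕ} : ∑ y : Fin n, uu y = 0 := by
  unfold uu
  rw [Fin.sum_univ_eq_sum_range (fun i => 2 * (i:ℝ) + 1 - n), range_u]; ring
lemma sum_u2 {n : ℕ} : ∑ y : Fin n, uu y ^ 2 = n * (n ^ 2 - 1) / 3 := by
  unfold uu
  rw [Fin.sum_univ_eq_sum_range (fun i => (2 * (i:ℝ) + 1 - n) ^ 2), range_u2]; ring

/-- sum over all ordered pairs -/
noncomputable def BB {n : ℕ} (h : Fin n → Fin n → Fin n → ℝ) (a b c : Fin n) : ℝ :=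
  ∑ x : Fin n, ∑ y : Fin n, h (swap x y a) (swap x y b) (swap x y c)

lemma ptw {n : ℕ} (h : Fin n → Fin n → Fin n → ℝ) {a b c : Fin n} (hab : a ≠ b) (hac : a ≠ c)
    (hbc : b ≠ c) (x y : Fin n) : h (swap x y a) (swap x y b) (swap x y c) =
    h a b c + (if x = a then h y b c - h a b c else 0) + (if x = b then h a y c - h a b c else 0)
     + (if x = c then h a b y - h a b c else 0)
     + (if y = a then h x b c - h a b c else 0) + (if y = b then h a x c - h a b c else 0)
     + (if y = c then h a b x - h a b c else 0)
     + (if x = a then if y = b then h b a c - h b b c - h a a c + h a b c else 0 else 0)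
     + (if x = b then if y = a then h b a c - h b b c - h a a c + h a b c else 0 else 0)
     + (if x = a then if y = c then h c b a - h c b c - h a b a + h a b c else 0 else 0)
     + (if x = c then if y = a then h c b a - h c b c - h a b a + h a b c else 0 else 0)
     + (if x = b then if y = c then h a c b - h a c c - h a b b + h a b c else 0 else 0)
     + (if x = c then if y = b then h a c b - h a c c - h a b b + h a b c else 0 else 0) := by
  have e : ∀ z, swap x y z = if z = x then y else if z = y then x else z := fun z => swap_apply_def x y z
  rw [e, e, e]
  by_cases xa : x = a
  · subst xa
    by_cases yb : y = b
    · subst yb; simp [hab, hac, hbc, hab.symm, hac.symm, hbc.symm]; ring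
    by_cases yc : y = c
    · subst yc; simp [hab, hac, hbc, hab.symm, hac.symm, hbc.symm]; ring
    simp [hab, hac, hbc, hab.symm, hac.symm, hbc.symm, yb, yc, Ne.symm yb, Ne.symm yc]
  by_cases xb : x = b
  · subst xb
    by_cases yb : y = a
    · subst yb; simp [hab, hac, hbc, hab.symm, hac.symm, hbc.symm]; ring
    by_cases yc : y = c
    · subst yc; simp [hab, hac, hbc, hab.symm, hac.symm, hbc.symm]; ring
    simp [hab, hac, hbc, hab.symm, hac.symm, hbc.symm, yb, yc, Ne.symm yb, Ne.symm yc]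
  by_cases xc : x = c
  · subst xc
    by_cases yb : y = a
    · subst yb; simp [hab, hac, hbc, hab.symm, hac.symm, hbc.symm]; ring
    by_cases yc : y = b
    · subst yc; simp [hab, hac, hbc, hab.symm, hac.symm, hbc.symm]; ring
    simp [hab, hac, hbc, hab.symm, hac.symm, hbc.symm, yb, yc, Ne.symm yb, Ne.symm yc]
  simp only [xa, xb, xc, Ne.symm xa, Ne.symm xb, Ne.symm xc, if_false]
  by_cases ya : y = a
  · subst ya; simp [hab, hac, hbc, hab.symm, hac.symm, hbc.symm]
  by_cases yb : y = b
  · subst yb; simp [hab, hac, hbc, hab.symm, hac.symm, hbc.symm]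
  by_cases yc : y = c
  · subst yc; simp [hab, hac, hbc, hab.symm, hac.symm, hbc.symm]
  simp [ya, yb, yc, Ne.symm ya, Ne.symm yb, Ne.symm yc]

lemma BB_eq {n : ℕ} (h : Fin n → Fin n → Fin n → ℝ) {a b c : Fin n} (hab : a ≠ b) (hac : a ≠ c)
    (hbc : b ≠ c) : BB h a b c = ((n:ℝ) ^ 2 - 6 * n + 6) * h a b c
      + 2 * (h b a c + h a c b + h c b a)
      + 2 * (∑ y, h y b c + ∑ y, h a y c + ∑ y, h a b y)
      - 2 * (h b b c + h c b c + h a a c + h a c c + h a b a + h a b b) := by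
  unfold BB
  simp_rw [ptw h hab hac hbc, sum_add_distrib]
  have e : ∀ (z : Fin n) (f : Fin n → ℝ), (∑ x : Fin n, ∑ y : Fin n, if x = z then f y else 0) = ∑ y, f y := by
    intro z f
    rw [sum_comm]; simp
  have e' : ∀ (z : Fin n) (f : Fin n → ℝ), (∑ x : Fin n, ∑ y : Fin n, if y = z then f x else 0) = ∑ y, f y := by
    intro z f
    simp
  have e2 : ∀ (z w : Fin n) (f : ℝ), (∑ x : Fin n, ∑ y : Fin n, if x = z then (if y = w then f else 0) else 0) = f := by
    intro z w f
    rw [sum_comm]; simp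
  simp only [e2]
  rw [e a (fun y => h y b c - h a b c), e b (fun y => h a y c - h a b c), e c (fun y => h a b y - h a b c),
   e' a (fun y => h y b c - h a b c), e' b (fun y => h a y c - h a b c), e' c (fun y => h a b y - h a b c)]
  simp [sum_sub_distrib]
  ring

noncomputable def kk {n : ℕ} (a b : Fin n) : ℝ := sg a b * uu a
noncomputable def SS {n : ℕ} (a b c : Fin n) : ℝ :=
  kk b c + kk c b + kk b a + kk a b - 2 * (kk a c + kk c a)
noncomputable def MM {n : ℕ} (a b c : Fin n) : ℝ :=
  kk b c - kk c b + kk b a - kk a b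
noncomputable def WW {n : ℕ} (a b c : Fin n) : ℝ := 2 * uu b ^ 2 - uu a ^ 2 - uu c ^ 2

lemma sum_kl {n : ℕ} (b : Fin n) : ∑ y : Fin n, kk y b = (uu b ^ 2 - n ^ 2 + 1) / 2 := sum_su b
lemma sum_kr {n : ℕ} (b : Fin n) : ∑ y : Fin n, kk b y = - uu b ^ 2 := by
  unfold kk; rw [← sum_mul, sum_sr]; ring
lemma kk_self {n : ℕ} (a : Fin n) : kk a a = 0 := by simp [kk, sg_self]

section
variable {n : ℕ} {a b c : Fin n} (hab : a ≠ b) (hac : a ≠ c) (hbc : b ≠ c)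

lemma BW (hab : a ≠ b) (hac : a ≠ c) (hbc : b ≠ c) :
    BB WW a b c = ((n:ℝ) ^ 2 - 2 * n) * WW a b c := by
  rw [BB_eq _ hab hac hbc]
  simp only [WW, sum_sub_distrib, ← mul_sum, sum_u2, sum_const, card_univ, Fintype.card_fin, nsmul_eq_mul]
  ring
lemma BD (hab : a ≠ b) (hac : a ≠ c) (hbc : b ≠ c) :
    BB (fun a _ c => uu c - uu a) a b c = ((n:ℝ) ^ 2 - 2 * n) * (uu c - uu a) := by
  rw [BB_eq _ hab hac hbc]
  simp only [sum_sub_distrib, ← mul_sum, sum_u, sum_const, card_univ, Fintype.card_fin, nsmul_eq_mul]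
  ring
lemma BSg (hab : a ≠ b) (hac : a ≠ c) (hbc : b ≠ c) :
    BB (fun a b c => sg a b + sg b c) a b c =
      ((n:ℝ) ^ 2 - 4 * n) * (sg a b + sg b c) + 2 * (uu c - uu a) := by
  rw [BB_eq _ hab hac hbc]
  simp only [sum_add_distrib, ← mul_sum, sum_sl, sum_sr, sum_const, card_univ, Fintype.card_fin, nsmul_eq_mul, sg_self]
  rw [sg_anti a b, sg_anti b c]
  ring
lemma BS (hab : a ≠ b) (hac : a ≠ c) (hbc : b ≠ c) :
    BB SS a b c = ((n:ℝ) - 2) ^ 2 * SS a b c - WW a b c := by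
  rw [BB_eq _ hab hac hbc]
  simp only [SS, WW, sum_add_distrib, sum_sub_distrib, ← mul_sum, sum_kl, sum_kr, sum_const, card_univ, Fintype.card_fin, nsmul_eq_mul, kk_self]
  ring
lemma BM (hab : a ≠ b) (hac : a ≠ c) (hbc : b ≠ c) :
    BB MM a b c = ((n:ℝ) ^ 2 - 4 * n) * MM a b c - 3 * WW a b c := by
  rw [BB_eq _ hab hac hbc]
  simp only [MM, WW, sum_add_distrib, sum_sub_distrib, ← mul_sum, sum_kl, sum_kr, sum_const, card_univ, Fintype.card_fin, nsmul_eq_mul, kk_self]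
  ring
lemma BP (hab : a ≠ b) (hac : a ≠ c) (hbc : b ≠ c) :
    BB (fun a b c => sg a b * sg b c) a b c = ((n:ℝ) ^ 2 - 6 * n + 6) * (sg a b * sg b c) 
      - 2 * (n - 1) + SS a b c + MM a b c := by
  rw [BB_eq _ hab hac hbc]
  simp only [SS, MM, kk, ← sum_mul, ← mul_sum, sum_sl, sum_sr, sum_ss hac, sg_self]
  have h := sg_cyc hac b
  have h1 := sg_sq hbc
  have h2 := sg_sq hab
  rw [sg_anti a b, sg_anti b c, sg_anti a c]
  linear_combination 2 * h + 2 * h1 + 2 * h2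
end

lemma BB_add {n : ℕ} (f g : Fin n → Fin n → Fin n → ℝ) (a b c : Fin n) :
    BB (fun a b c => f a b c + g a b c) a b c = BB f a b c + BB g a b c := by
  simp [BB, sum_add_distrib]
lemma BB_smul {n : ℕ} (r : ℝ) (g : Fin n → Fin n → Fin n → ℝ) (a b c : Fin n) :
    BB (fun a b c => r * g a b c) a b c = r * BB g a b c := by
  simp [BB, mul_sum]
lemma BB_const {n : ℕ} (r : ℝ) (a b c : Fin n) :
    BB (fun _ _ _ => r) a b c = n ^ 2 * r := by
  simp [BB]; ring

noncomputable def LL {n : ℕ} (x0 x1 x2 x3 x4 x5 x6 : ℝ) (a b c : Fin n) : ℝ :=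
  x0 + x1 * (uu c - uu a) + x2 * WW a b c + x3 * (sg a b + sg b c) + x4 * SS a b c + x5 * MM a b c
    + x6 * (sg a b * sg b c)

lemma BL {n : ℕ} {a b c : Fin n} (hab : a ≠ b) (hac : a ≠ c) (hbc : b ≠ c)
    (x0 x1 x2 x3 x4 x5 x6 : ℝ) :
    BB (LL x0 x1 x2 x3 x4 x5 x6) a b c =
      LL (n ^ 2 * x0 - 2 * (n - 1) * x6) ((n ^ 2 - 2 * n) * x1 + 2 * x3)
        ((n ^ 2 - 2 * n) * x2 - x4 - 3 * x5) ((n ^ 2 - 4 * n) * x3) ((n - 2) ^ 2 * x4 + x6)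
        ((n ^ 2 - 4 * n) * x5 + x6) ((n ^ 2 - 6 * n + 6) * x6) a b c := by
  have : BB (LL x0 x1 x2 x3 x4 x5 x6) a b c = n ^ 2 * x0 + x1 * BB (fun a _ c => uu c - uu a) a b c
      + x2 * BB WW a b c + x3 * BB (fun a b c => sg a b + sg b c) a b c + x4 * BB SS a b c
      + x5 * BB MM a b c + x6 * BB (fun a b c => sg a b * sg b c) a b c := by
    rw [← BB_const x0 a b c]
    simp only [← BB_smul]
    rw [← BB_add, ← BB_add, ← BB_add, ← BB_add, ← BB_add, ← BB_add]
    rfl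
  rw [this, BW hab hac hbc, BD hab hac hbc, BSg hab hac hbc, BS hab hac hbc, BM hab hac hbc,
    BP hab hac hbc]
  unfold LL
  ring

lemma swap_eq_aux {n : ℕ} {x y x' y' : Fin n} (h : x < y) (h' : x' < y')
    (e : swap x y = swap x' y') : x = x' ∧ y = y' := by
  have e1 : swap x' y' x = y := by rw [← e]; simp
  rw [swap_apply_def] at e1
  split_ifs at e1 with h1 h2
  · exact ⟨h1, e1.symm⟩
  · subst h2; subst e1; exact absurd (h.trans h') (lt_irrefl _)
  · exact absurd e1 h.ne

lemma sum_T {n : ℕ} (F : Perm (Fin n) → ℝ) :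
    ∑ π ∈ (Finset.univ.filter fun π : Equiv.Perm (Fin n) =>
            ∃ a b : Fin n, a ≠ b ∧ π = Equiv.swap a b), F π =
      (∑ x : Fin n, ∑ y : Fin n, F (swap x y) - n * F 1) / 2 := by
  have h1 : (Finset.univ.filter fun π : Equiv.Perm (Fin n) =>
            ∃ a b : Fin n, a ≠ b ∧ π = Equiv.swap a b) =
      ((Finset.univ : Finset (Fin n × Fin n)).filter fun p => p.1 < p.2).image
        fun p => swap p.1 p.2 := by
    ext π
    simp only [mem_filter, mem_univ, true_and, mem_image, Prod.exists]
    constructor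
    · rintro ⟨a, b, h, rfl⟩
      rcases lt_or_gt_of_ne h with h | h
      · exact ⟨a, b, h, rfl⟩
      · exact ⟨b, a, h, swap_comm _ _⟩
    · rintro ⟨a, b, h, rfl⟩
      exact ⟨a, b, h.ne, rfl⟩
  rw [h1, sum_image, sum_filter, Fintype.sum_prod_type]
  · have h2 : ∑ x : Fin n, ∑ y : Fin n, F (swap x y) =
        ∑ x : Fin n, ∑ y : Fin n, (if x < y then F (swap x y) else 0) +
        ∑ x : Fin n, ∑ y : Fin n, (if y < x then F (swap y x) else 0) +
        ∑ x : Fin n, ∑ y : Fin n, (if x = y then F 1 else 0) := by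
      simp_rw [← sum_add_distrib]
      refine sum_congr rfl fun x _ => sum_congr rfl fun y _ => ?_
      rcases lt_trichotomy x y with h | h | h
      · simp [h, h.not_gt, h.ne]
      · subst h; simp; rfl
      · simp [h, h.not_gt, h.ne', swap_comm x y]
    have h3 : ∑ x : Fin n, ∑ y : Fin n, (if y < x then F (swap y x) else 0) =
      ∑ x : Fin n, ∑ y : Fin n, (if x < y then F (swap x y) else 0) := sum_comm
    rw [h2, h3]
    simp
  · intro p hp q hq e
    simp at hp hq e
    have := swap_eq_aux hp hq e
    exact Prod.ext this.1 this.2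

lemma iter {n : ℕ} (g : Fin n → Fin n → Fin n → ℝ) (μ : ℝ)
    (hg : ∀ a b c, a ≠ b → a ≠ c → b ≠ c → BB g a b c = μ * g a b c) (t : ℕ) {a b c : Fin n}
    (hab : a ≠ b) (hac : a ≠ c) (hbc : b ≠ c) :
    ∑ γ ∈ Fintype.piFinset fun _ : Fin t =>
          (Finset.univ.filter fun π : Equiv.Perm (Fin n) =>
            ∃ a b : Fin n, a ≠ b ∧ π = Equiv.swap a b),
        g ((List.ofFn γ).prod a) ((List.ofFn γ).prod b) ((List.ofFn γ).prod c) =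
      ((μ - n) / 2) ^ t * g a b c := by
  induction t with
  | zero => simp
  | succ t ih =>
    set T := (Finset.univ.filter fun π : Equiv.Perm (Fin n) =>
            ∃ a b : Fin n, a ≠ b ∧ π = Equiv.swap a b) with hT
    have key : ∑ γ ∈ Fintype.piFinset fun _ : Fin (t+1) => T,
        g ((List.ofFn γ).prod a) ((List.ofFn γ).prod b) ((List.ofFn γ).prod c) =
      ∑ γ ∈ Fintype.piFinset fun _ : Fin t => T, ∑ π ∈ T,
        g (π ((List.ofFn γ).prod a)) (π ((List.ofFn γ).prod b)) (π ((List.ofFn γ).prod c)) := by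
      rw [sum_comm, ← sum_product']
      symm
      refine sum_bij' (fun p _ => (Fin.cons p.1 p.2 : Fin (t+1) → Perm (Fin n)))
        (fun γ _ => (γ 0, fun i => γ i.succ)) ?_ ?_ ?_ ?_ ?_
      · intro p hp
        simp only [mem_product, Fintype.mem_piFinset] at hp ⊢
        intro i
        refine Fin.cases ?_ (fun j => ?_) i
        · exact hp.1
        · exact hp.2 j
      · intro γ hγ
        simp only [mem_product, Fintype.mem_piFinset] at hγ ⊢
        exact ⟨hγ _, fun _ => hγ _⟩
      · intro p hp; simp
      · intro γ hγ
        exact Fin.cons_self_tail γ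
      · intro p hp
        simp [List.ofFn_succ]
    rw [key]
    have : ∀ γ : Fin t → Perm (Fin n), ∑ π ∈ T,
        g (π ((List.ofFn γ).prod a)) (π ((List.ofFn γ).prod b)) (π ((List.ofFn γ).prod c)) =
        ((μ - n) / 2) * g ((List.ofFn γ).prod a) ((List.ofFn γ).prod b) ((List.ofFn γ).prod c) := by
      intro γ
      set σ := (List.ofFn γ).prod
      rw [hT, sum_T (fun π => g (π (σ a)) (π (σ b)) (π (σ c)))]
      have := hg (σ a) (σ b) (σ c) (σ.injective.ne hab) (σ.injective.ne hac) (σ.injective.ne hbc)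
      unfold BB at this
      rw [this]
      simp
      ring
    simp_rw [this, ← mul_sum]
    rw [ih]; ring

lemma LL3 {a b c : Fin 3} (hab : a ≠ b) (hac : a ≠ c) (hbc : b ≠ c) :
    MM a b c + 1 / 2 * WW a b c = 0 := by
  fin_cases a <;> fin_cases b <;> fin_cases c <;>
    simp [MM, WW, kk, sg, uu, Fin.lt_def] at hab hac hbc ⊢ <;> norm_num

lemma f_eq {n : ℕ} {a b c : Fin n} (hab : a ≠ b) (hbc : b ≠ c) :
    (if a < b ∧ b < c then (1:ℝ) else 0) = LL (1/4) 0 0 (1/4) 0 0 (1/4) a b c := by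
  unfold LL sg
  rcases lt_or_gt_of_ne hab with h | h <;> rcases lt_or_gt_of_ne hbc with h' | h' <;>
    simp [h, h', h.not_gt, h'.not_gt] <;> norm_num

lemma main_sum {n : ℕ} (hn : 3 ≤ n) (t : ℕ) {a b c : Fin n}
    (hab : a ≠ b) (hac : a ≠ c) (hbc : b ≠ c) (m : ℝ) (hm : m = 1 / (2 * ((n:ℝ) - 3))) :
    ∑ γ ∈ Fintype.piFinset fun _ : Fin t =>
          (Finset.univ.filter fun π : Equiv.Perm (Fin n) =>
            ∃ a b : Fin n, a ≠ b ∧ π = Equiv.swap a b),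
        (if (List.ofFn γ).prod a < (List.ofFn γ).prod b ∧ (List.ofFn γ).prod b < (List.ofFn γ).prod c
          then (1:ℝ) else 0) =
      (((n:ℝ)^2 - n) / 2) ^ t * LL (1/6) 0 0 0 0 0 0 a b c
      + (((n:ℝ)^2 - 2 * n - n) / 2) ^ t * LL 0 (1/(4*n)) (-1/(8*n*(n-2))) 0 0 0 0 a b c
      + ((((n:ℝ) - 2)^2 - n) / 2) ^ t * LL 0 0 (1/(16*(n-1)*(n-2))) 0 (1/(8*(n-1))) 0 0 a b c
      + (((n:ℝ)^2 - 4 * n - n) / 2) ^ t * LL 0 (-1/(4*n)) (m*3/(8*n)) (1/4) 0 (m/4) 0 a b c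
      + (((n:ℝ)^2 - 6 * n + 6 - n) / 2) ^ t *
        LL (1/12) 0 (-1/(16*(n-1)*(n-2)) - m*3/(8*n) + 1/(8*n*(n-2))) 0 (-1/(8*(n-1))) (-m/4) (1/4) a b c := by
  have hn' : (3:ℝ) ≤ n := by exact_mod_cast hn
  have hn0 : (n:ℝ) ≠ 0 := by linarith
  have hn1 : (n:ℝ) - 1 ≠ 0 := by intro h; linarith
  have hn2 : (n:ℝ) - 2 ≠ 0 := by intro h; linarith
  rw [← iter _ _ ?_ t hab hac hbc, ← iter _ _ ?_ t hab hac hbc, ← iter _ _ ?_ t hab hac hbc,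
    ← iter _ _ ?_ t hab hac hbc, ← iter _ _ ?_ t hab hac hbc]
  · simp_rw [← sum_add_distrib]
    refine sum_congr rfl fun γ _ => ?_
    set σ := (List.ofFn γ).prod
    rw [f_eq (σ.injective.ne hab) (σ.injective.ne hbc)]
    unfold LL
    ring
  · intro a b c hab hac hbc
    rw [BL hab hac hbc]
    by_cases h3 : n = 3
    · subst h3
      have := LL3 hab hac hbc
      norm_num at hm
      subst hm
      unfold LL
      norm_num
      linear_combination 1/4 * this
    · have : (n:ℝ) - 3 ≠ 0 := by
        intro h; apply h3
        have : (n:ℝ) = (3:ℕ) := by push_cast; linarith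
        exact_mod_cast this
      subst hm
      unfold LL
      field_simp
      ring
  · intro a b c hab hac hbc
    rw [BL hab hac hbc]
    unfold LL
    field_simp
    ring
  · intro a b c hab hac hbc
    rw [BL hab hac hbc]
    unfold LL
    field_simp
    ring
  · intro a b c hab hac hbc
    rw [BL hab hac hbc]
    unfold LL
    field_simp
    ring
  · intro a b c hab hac hbc
    rw [BL hab hac hbc]
    unfold LL
    ring

lemma tri (n : ℕ) (g : ℕ → ℕ → ℕ → ℝ) :
    (∑ x : Fin n × Fin n × Fin n, if x.1 < x.2.1 ∧ x.2.1 < x.2.2 then g x.1 x.2.1 x.2.2 else 0)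
    = ∑ k ∈ range n, ∑ j ∈ range k, ∑ i ∈ range j, g i j k := by
  have aux : ∀ (k : ℕ) (hk : k ≤ n) (G : ℕ → ℝ), ∑ j ∈ range k, G j = ∑ j : Fin n, if j.val < k then G j else 0 := by
    intro k hk G
    rw [Fin.sum_univ_eq_sum_range (fun j => if j < k then G j else 0), ← sum_filter]
    congr 1
    ext y
    simp; omega
  rw [← Fin.sum_univ_eq_sum_range (fun k => ∑ j ∈ range k, ∑ i ∈ range j, g i j k), Fintype.sum_prod_type, ]
  simp_rw [Fintype.sum_prod_type]
  rw [sum_comm]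
  conv_lhs => enter [2, j]; rw [sum_comm]
  rw [sum_comm]
  refine sum_congr rfl fun k _ => ?_
  rw [aux k k.2.le]
  refine sum_congr rfl fun j _ => ?_
  rw [aux j j.2.le]
  simp only [Fin.lt_def]
  by_cases h : j.val < k.val <;> simp [h]

lemma tri_one (n : ℕ) : ∑ k ∈ range n, ∑ j ∈ range k, ∑ _i ∈ range j, (1:ℝ) = n * (n-1) * (n-2) / 6 := by
  have h : ∀ k : ℕ, ∑ j ∈ range k, ∑ _i ∈ range j, (1:ℝ) = k * (k-1) / 2 := by
    intro k
    induction k with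
    | zero => simp
    | succ k ih => rw [sum_range_succ, ih]; simp; ring
  simp_rw [h]
  induction n with
  | zero => simp
  | succ k ih => rw [sum_range_succ, ih]; push_cast; ring

lemma tri_D (n : ℕ) (N : ℝ) : ∑ k ∈ range n, ∑ j ∈ range k, ∑ i ∈ range j,
    ((2 * (k:ℝ) + 1 - N) - (2 * (i:ℝ) + 1 - N)) = (n+1) * n * (n-1) * (n-2) / 6 := by
  have h0 : ∀ (k j : ℕ), ∑ i ∈ range j, ((2 * (k:ℝ) + 1 - N) - (2 * (i:ℝ) + 1 - N)) = 2 * k * j - j * (j - 1) := by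
    intro k j
    induction j with
    | zero => simp
    | succ j ih => rw [sum_range_succ, ih]; push_cast; ring
  have h : ∀ k l : ℕ, ∑ j ∈ range k, (2 * (l:ℝ) * j - j * (j - 1)) = l * k * (k-1) - k * (k-1) * (k-2) / 3 := by
    intro k l
    induction k with
    | zero => simp
    | succ k ih => rw [sum_range_succ, ih]; push_cast; ring
  simp_rw [h0, h]
  induction n with
  | zero => simp
  | succ k ih => rw [sum_range_succ, ih]; push_cast; ring

lemma tri_W (n : ℕ) : ∑ k ∈ range n, ∑ j ∈ range k, ∑ i ∈ range j,
    (2 * (2 * (j:ℝ) + 1 - (n:ℝ)) ^ 2 - (2 * (i:ℝ) + 1 - (n:ℝ)) ^ 2 - (2 * (k:ℝ) + 1 - (n:ℝ)) ^ 2) =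
      - (((n:ℝ)+2) * (n+1) * n * (n-1) * (n-2) / 15) := by
  have h0 : ∀ (N : ℝ) (k j : ℕ), ∑ i ∈ range j, (2 * (2 * (j:ℝ) + 1 - N) ^ 2 - (2 * (i:ℝ) + 1 - N) ^ 2 - (2 * (k:ℝ) + 1 - N) ^ 2)
      = j * (2 * (2 * (j:ℝ) + 1 - N) ^ 2 - (2 * (k:ℝ) + 1 - N) ^ 2) - (j * (4 * j ^ 2 - 1) / 3 - 2 * N * j ^ 2 + N ^ 2 * j) := by
    intro N k j
    rw [← range_u2]
    simp [sum_sub_distrib]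
    ring
  have h : ∀ (N : ℝ) (k l : ℕ), ∑ j ∈ range k, (j * (2 * (2 * (j:ℝ) + 1 - N) ^ 2 - (2 * (l:ℝ) + 1 - N) ^ 2) - (j * (4 * j ^ 2 - 1) / 3 - 2 * N * j ^ 2 + N ^ 2 * j))
     = 20/3 * (k * (k-1) / 2) ^ 2 + (8 - 6 * N) * ((k-1) * k * (2 * k - 1) / 6)
       + (2 * (1 - N) ^ 2 + 1 / 3 - N ^ 2 - (2 * (l:ℝ) + 1 - N) ^ 2) * (k * (k-1) / 2) := by
    intro N k l
    induction k with
    | zero => simp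
    | succ k ih => rw [sum_range_succ, ih]; push_cast; ring
  have h2 : ∀ (N : ℝ) (m : ℕ), ∑ k ∈ range m, (20/3 * ((k:ℝ) * (k-1) / 2) ^ 2 + (8 - 6 * N) * ((k-1) * k * (2 * k - 1) / 6)
       + (2 * (1 - N) ^ 2 + 1 / 3 - N ^ 2 - (2 * (k:ℝ) + 1 - N) ^ 2) * (k * (k-1) / 2)) =
       - (((m:ℝ)+2) * (m+1) * m * (m-1) * (m-2) / 15) := by
    intro N m
    induction m with
    | zero => simp
    | succ k ih => rw [sum_range_succ, ih]; push_cast; ring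
  simp_rw [h0, h]
  exact h2 n n

lemma LL_chamber {n : ℕ} (x0 x1 x2 x3 x4 x5 x6 : ℝ) {a b c : Fin n} (h : a < b) (h' : b < c) :
    LL x0 x1 x2 x3 x4 x5 x6 a b c = (x0 + 2 * x3 + x6) * 1 + (x1 + x4 + x5) *
      ((2 * ((c:ℕ):ℝ) + 1 - n) - (2 * ((a:ℕ):ℝ) + 1 - n)) + x2 *
      (2 * (2 * ((b:ℕ):ℝ) + 1 - n) ^ 2 - (2 * ((a:ℕ):ℝ) + 1 - n) ^ 2 - (2 * ((c:ℕ):ℝ) + 1 - n) ^ 2) := by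
  unfold LL SS MM WW kk
  rw [sg_anti a b, sg_anti b c, sg_anti a c, sg_lt h, sg_lt h', sg_lt (h.trans h')]
  unfold uu
  ring

lemma sum_LL {n : ℕ} (x0 x1 x2 x3 x4 x5 x6 : ℝ) :
    (∑ x : Fin n × Fin n × Fin n, if x.1 < x.2.1 ∧ x.2.1 < x.2.2 then
      LL x0 x1 x2 x3 x4 x5 x6 x.1 x.2.1 x.2.2 else 0) =
    (x0 + 2 * x3 + x6) * (n * (n-1) * (n-2) / 6) + (x1 + x4 + x5) * ((n+1) * n * (n-1) * (n-2) / 6)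
      + x2 * (- ((n+2) * (n+1) * n * (n-1) * (n-2) / 15)) := by
  rw [← tri_one, ← tri_D n n, ← tri_W]
  simp only [mul_sum, ← sum_add_distrib]
  rw [← tri]
  refine sum_congr rfl fun x _ => ?_
  split_ifs with h
  · exact LL_chamber _ _ _ _ _ _ _ h.1 h.2
  · rfl

theorem stmt19 (n : ℕ) (hn : 3 ≤ n) (t : ℕ) :
    (2 / ((n : ℝ) * ((n : ℝ) - 1))) ^ t *
      (∑ γ ∈ Fintype.piFinset fun _ : Fin t =>
          (Finset.univ.filter fun π : Equiv.Perm (Fin n) =>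
            ∃ a b : Fin n, a ≠ b ∧ π = Equiv.swap a b),
        ((((Finset.univ : Finset (Fin n × Fin n × Fin n)).filter fun x =>
            x.1 < x.2.1 ∧ x.2.1 < x.2.2 ∧
            (List.ofFn γ).prod x.1 < (List.ofFn γ).prod x.2.1 ∧
            (List.ofFn γ).prod x.2.1 < (List.ofFn γ).prod x.2.2).card : ℝ)))
    = (n.choose 3 : ℝ) / 6
      + ((n : ℝ) + 1) * ((n : ℝ) - 1) * (3 * (n : ℝ) - 4) / 60 *
          (1 - 2 / ((n : ℝ) - 1)) ^ t
      + ((n : ℝ) + 1) * (n : ℝ) * ((n : ℝ) - 3) / 60 * (1 - 4 / (n : ℝ)) ^ t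
      + (3 * (n : ℝ) - 2) * ((n : ℝ) - 1) * ((n : ℝ) - 2) / 60 *
          (1 - 4 / ((n : ℝ) - 1)) ^ t
      + (n : ℝ) * ((n : ℝ) - 2) * ((n : ℝ) - 4) / 45 * (1 - 6 / (n : ℝ)) ^ t := by
  set T := (Finset.univ.filter fun π : Equiv.Perm (Fin n) =>
            ∃ a b : Fin n, a ≠ b ∧ π = Equiv.swap a b) with hT
  obtain ⟨m, hm⟩ : ∃ m : ℝ, m = 1 / (2 * ((n:ℝ) - 3)) := ⟨_, rfl⟩
  have hn' : (3:ℝ) ≤ n := by exact_mod_cast hn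
  have hn0 : (n:ℝ) ≠ 0 := by linarith
  have hn1 : (n:ℝ) - 1 ≠ 0 := by intro h; linarith
  have hn2 : (n:ℝ) - 2 ≠ 0 := by intro h; linarith
  have hS : (∑ γ ∈ Fintype.piFinset fun _ : Fin t => T,
        ((((Finset.univ : Finset (Fin n × Fin n × Fin n)).filter fun x =>
            x.1 < x.2.1 ∧ x.2.1 < x.2.2 ∧
            (List.ofFn γ).prod x.1 < (List.ofFn γ).prod x.2.1 ∧
            (List.ofFn γ).prod x.2.1 < (List.ofFn γ).prod x.2.2).card : ℝ))) =
      ∑ x : Fin n × Fin n × Fin n, if x.1 < x.2.1 ∧ x.2.1 < x.2.2 then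
        ∑ γ ∈ Fintype.piFinset fun _ : Fin t => T,
          (if (List.ofFn γ).prod x.1 < (List.ofFn γ).prod x.2.1 ∧
            (List.ofFn γ).prod x.2.1 < (List.ofFn γ).prod x.2.2 then (1:ℝ) else 0) else 0 := by
    simp_rw [← sum_boole]
    rw [sum_comm]
    refine sum_congr rfl fun x _ => ?_
    split_ifs with h
    · simp [h.1, h.2]
    · refine sum_eq_zero fun γ _ => if_neg fun h' => h ⟨h'.1, h'.2.1⟩
  have hS2 : (∑ x : Fin n × Fin n × Fin n, if x.1 < x.2.1 ∧ x.2.1 < x.2.2 then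
        ∑ γ ∈ Fintype.piFinset fun _ : Fin t => T,
          (if (List.ofFn γ).prod x.1 < (List.ofFn γ).prod x.2.1 ∧
            (List.ofFn γ).prod x.2.1 < (List.ofFn γ).prod x.2.2 then (1:ℝ) else 0) else 0) =
      ∑ x : Fin n × Fin n × Fin n,
      ((((n:ℝ)^2 - n) / 2) ^ t * (if x.1 < x.2.1 ∧ x.2.1 < x.2.2 then LL (1/6) 0 0 0 0 0 0 x.1 x.2.1 x.2.2 else 0)
      + (((n:ℝ)^2 - 2 * n - n) / 2) ^ t * (if x.1 < x.2.1 ∧ x.2.1 < x.2.2 then LL 0 (1/(4*n)) (-1/(8*n*(n-2))) 0 0 0 0 x.1 x.2.1 x.2.2 else 0)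
      + ((((n:ℝ) - 2)^2 - n) / 2) ^ t * (if x.1 < x.2.1 ∧ x.2.1 < x.2.2 then LL 0 0 (1/(16*(n-1)*(n-2))) 0 (1/(8*(n-1))) 0 0 x.1 x.2.1 x.2.2 else 0)
      + (((n:ℝ)^2 - 4 * n - n) / 2) ^ t * (if x.1 < x.2.1 ∧ x.2.1 < x.2.2 then LL 0 (-1/(4*n)) (m*3/(8*n)) (1/4) 0 (m/4) 0 x.1 x.2.1 x.2.2 else 0)
      + (((n:ℝ)^2 - 6 * n + 6 - n) / 2) ^ t * (if x.1 < x.2.1 ∧ x.2.1 < x.2.2 then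
        LL (1/12) 0 (-1/(16*(n-1)*(n-2)) - m*3/(8*n) + 1/(8*n*(n-2))) 0 (-1/(8*(n-1))) (-m/4) (1/4) x.1 x.2.1 x.2.2 else 0)) := by
    refine sum_congr rfl fun x _ => ?_
    split_ifs with h
    · exact main_sum hn t h.1.ne (h.1.trans h.2).ne h.2.ne m hm
    · simp
  rw [hS, hS2]
  simp only [sum_add_distrib, ← mul_sum, sum_LL]
  simp only [mul_add ((2 / ((n : ℝ) * ((n : ℝ) - 1))) ^ t), ← mul_assoc, ← mul_pow]
  have e0 : 2 / ((n : ℝ) * (n - 1)) * (((n:ℝ)^2 - n) / 2) = 1 := by field_simp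
  have e1 : 2 / ((n : ℝ) * (n - 1)) * (((n:ℝ)^2 - 2 * n - n) / 2) = 1 - 2 / ((n:ℝ) - 1) := by
    field_simp; ring
  have e2 : 2 / ((n : ℝ) * (n - 1)) * ((((n:ℝ) - 2)^2 - n) / 2) = 1 - 4 / (n:ℝ) := by
    field_simp; ring
  have e3 : 2 / ((n : ℝ) * (n - 1)) * (((n:ℝ)^2 - 4 * n - n) / 2) = 1 - 4 / ((n:ℝ) - 1) := by
    field_simp; ring
  have e5 : 2 / ((n : ℝ) * (n - 1)) * (((n:ℝ)^2 - 6 * n + 6 - n) / 2) = 1 - 6 / (n:ℝ) := by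
    field_simp; ring
  have hc : (n.choose 3 : ℝ) = n * (n - 1) * (n - 2) / 6 := by
    rw [Nat.cast_choose_eq_descPochhammer_div]
    simp [descPochhammer_succ_right, Nat.factorial]
  rw [e0, e1, e2, e3, e5, one_pow, hc]
  generalize h1 : (1 - 2 / ((n:ℝ) - 1)) ^ t = z1
  generalize h2 : (1 - 4 / (n:ℝ)) ^ t = z2
  by_cases h3 : n = 3
  · subst h3
    norm_num at hm
    subst hm
    norm_num
    ring
  · have : (n:ℝ) - 3 ≠ 0 := by
      intro h; apply h3
      have : (n:ℝ) = (3:ℕ) := by push_cast; linarith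
      exact_mod_cast this
    generalize (1 - 4 / ((n:ℝ) - 1)) ^ t = z3
    generalize (1 - 6 / (n:ℝ)) ^ t = z5
    subst hm
    field_simp
    ring
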